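/- Let θ ∼ N(μ′, Σ) be a Gaussian random vector in ℝ^d, and define ℓ_BC(θ) = ½‖θ − μ‖² and the cliff reward J with parameters C ≫ ε² > 0 and optimum θ* = μ. There exist universal constants c₂, c₃ > 0 such that, if E[ℓ_BC(θ)] ≤ ε²/8, then J(θ*) − E[J(θ)] ≤ 2·E[ℓ_BC(θ)] + C·c₂·exp(−c₃·ε²/(2·E[ℓ_BC(θ)])). In particular, if ε² ≥ c₃^{−1}·E[ℓ_BC(θ)]·log(c₂·C/E[ℓ_BC(θ)]), then J(θ*) − E[J(θ)] ≤ 3·E[ℓ_BC(θ)]. -/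

import Mathlib

open MeasureTheory ProbabilityTheory

/-- The standard Gaussian measure on `ℝ^d` (i.i.d. `N(0,1)` coordinates). -/
noncomputable def stdGaussianPi (d : ℕ) : Measure (Fin d → ℝ) :=
  Measure.pi fun _ => gaussianReal 0 1

/-- `ν` is the law of a (possibly degenerate) Gaussian random vector in `ℝ^d` with mean `μ'`:
the pushforward of the standard Gaussian under the affine map `z ↦ μ' + A z` (so the covariance
is `Σ = A Aᵀ`). -/
def IsGaussianLaw {d : ℕ} (ν : Measure (Fin d → ℝ)) (μ' : Fin d → ℝ) : Prop :=
  ∃ A : Matrix (Fin d) (Fin d) ℝ,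
    ν = Measure.map (fun z => μ' + A.mulVec z) (stdGaussianPi d)

/-- Squared Euclidean norm on `ℝ^d`. -/
noncomputable def sqnorm {d : ℕ} (v : Fin d → ℝ) : ℝ := ∑ i, v i ^ 2

/-- The cliff reward on `ℝ^d` with target `μ` and parameters `ε, C`:
`J(θ) = −‖θ−μ‖²` if `‖θ − μ‖ ≤ ε`, and `J(θ) = −C` otherwise; `J(μ) = 0`. -/
noncomputable def cliffJVec {d : ℕ} (μ : Fin d → ℝ) (ε C : ℝ) (θ : Fin d → ℝ) : ℝ :=
  if Real.sqrt (sqnorm (θ - μ)) ≤ ε then -sqnorm (θ - μ) else -C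

/-!
By Markov's inequality a centered Gaussian `X` stays in the ball of radius `2 (E ‖X‖²)^(1/2)` with
probability at least `3 / 4`. The law of two independent copies of `X` is invariant under rotation
by `π / 4`, and Fernique's argument turns these two facts alone into
`E exp (κ ‖X‖² / E ‖X‖²) ≤ K` with universal `κ` and `K`, whatever the dimension. Since
`‖E X‖² ≤ E ‖X‖²`, centering extends this to all Gaussians at the price of worse constants, and
Chernoff's bound gives `P (r ≤ ‖X‖) ≤ K exp (-κ r² / E ‖X‖²)`. The cliff reward loses `‖θ - μ‖²`
inside the ball of radius `ε` and `C` outside, so its regret is at most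
`E ‖θ - μ‖² + C P (ε ≤ ‖θ - μ‖)`, to which the tail bound applies with `X = θ - μ`.
-/

section Markov

variable {Ω : Type*} [MeasurableSpace Ω] {P : Measure Ω} [IsProbabilityMeasure P]

lemma three_div_four_le_measureReal_le_two_mul_sqrt {f : Ω → ℝ} {s : ℝ}
    (hf : Integrable (fun ω ↦ f ω ^ 2) P) (hs : 0 < s) (hfs : ∫ ω, f ω ^ 2 ∂P ≤ s) :
    3 / 4 ≤ P.real {ω | f ω ≤ 2 * √s} := by
  have markov : P.real {ω | 4 * s ≤ f ω ^ 2} ≤ 1 / 4 := by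
    have := mul_meas_ge_le_integral_of_nonneg (ae_of_all P fun ω ↦ sq_nonneg (f ω)) hf (4 * s)
    nlinarith
  have cover : Set.univ ⊆ {ω | f ω ≤ 2 * √s} ∪ {ω | 4 * s ≤ f ω ^ 2} := fun ω _ ↦ by
    refine (le_total (f ω) (2 * √s)).imp id fun h ↦ ?_
    calc 4 * s = (2 * √s) ^ 2 := by rw [mul_pow, Real.sq_sqrt hs.le]; norm_num
      _ ≤ f ω ^ 2 := by gcongr
  have total : 1 ≤ P.real {ω | f ω ≤ 2 * √s} + P.real {ω | 4 * s ≤ f ω ^ 2} := by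
    rw [← probReal_univ (μ := P)]
    exact (measureReal_mono cover).trans (measureReal_union_le _ _)
  linarith

end Markov

section SecondMoment

variable {Ω E : Type*} [MeasurableSpace Ω] {P : Measure Ω} [IsProbabilityMeasure P]
  [NormedAddCommGroup E] [NormedSpace ℝ E] [CompleteSpace E] {X : Ω → E}

lemma sq_norm_integral_le (hX : MemLp X 2 P) :
    ‖∫ ω, X ω ∂P‖ ^ 2 ≤ ∫ ω, ‖X ω‖ ^ 2 ∂P :=
  (convexOn_univ_norm.pow (fun _ _ ↦ norm_nonneg _) 2).map_integral_le
    (by fun_prop) isClosed_univ (ae_of_all _ fun _ ↦ Set.mem_univ _) (hX.integrable one_le_two)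
    (hX.integrable_norm_pow two_ne_zero)

lemma integral_sq_norm_sub_integral_le (hX : MemLp X 2 P) :
    ∫ ω, ‖X ω - ∫ ω', X ω' ∂P‖ ^ 2 ∂P ≤ 4 * ∫ ω, ‖X ω‖ ^ 2 ∂P := by
  set m := ∫ ω, X ω ∂P
  have hXsq := hX.integrable_norm_pow two_ne_zero
  calc ∫ ω, ‖X ω - m‖ ^ 2 ∂P
    _ ≤ ∫ ω, 2 * (‖X ω‖ ^ 2 + ‖m‖ ^ 2) ∂P := by
      refine integral_mono ((hX.sub (memLp_const m)).integrable_norm_pow two_ne_zero)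
        ((hXsq.add (integrable_const _)).const_mul 2) fun ω ↦ ?_
      exact (pow_le_pow_left₀ (norm_nonneg _) (norm_sub_le _ _) 2).trans add_sq_le
    _ = 2 * (∫ ω, ‖X ω‖ ^ 2 ∂P + ‖m‖ ^ 2) := by
      rw [integral_const_mul, integral_add hXsq (integrable_const _), integral_const,
        probReal_univ, one_smul]
    _ ≤ 4 * ∫ ω, ‖X ω‖ ^ 2 ∂P := by linarith [sq_norm_integral_le hX]

end SecondMoment

/-- The rate `κ` in the uniform Fernique bound `E exp (κ ‖X‖² / s) ≤ K` for centered Gaussian `X`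
with `E ‖X‖² ≤ s`. By Markov's inequality the ball of radius `2√s` has mass at least `3 / 4`, and
Fernique's theorem for a ball of mass `c` and radius `a` has rate `logRatio c / a²`. -/
noncomputable def centeredExpRate : ℝ := Fernique.logRatio (3 / 4) / 4

/-- The bound `K` in the uniform Fernique bound `E exp (κ ‖X‖² / s) ≤ K` for centered Gaussian `X`
with `E ‖X‖² ≤ s`; the `3` is the odds `c / (1 - c)` of the mass `c = 3 / 4`. -/
noncomputable def centeredExpConst : ℝ :=
  Real.exp (Fernique.logRatio (3 / 4)) + ∑' n : ℕ, Real.exp (-2⁻¹ * Real.log 3 * 2 ^ n)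

/-- The rate in the uniform Fernique bound for Gaussian `X` that need not be centered. Centering
costs a factor `4` in the second moment and a factor `2` in `‖X‖² ≤ 2 ‖X - E X‖² + 2 ‖E X‖²`. -/
noncomputable def gaussianExpRate : ℝ := centeredExpRate / 8

/-- The bound in the uniform Fernique bound for Gaussian `X` that need not be centered; the
exponential factor absorbs the contribution of `‖E X‖² ≤ E ‖X‖²`. -/
noncomputable def gaussianExpConst : ℝ := Real.exp (centeredExpRate / 4) * centeredExpConst

lemma inv_two_lt_three_div_four : (2⁻¹ : ENNReal) < 3 / 4 := by
  rw [ENNReal.lt_div_iff_mul_lt (by simp) (by simp), mul_comm, ← div_eq_mul_inv,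
    ENNReal.div_lt_iff (by simp) (by simp)]
  norm_num

lemma three_div_four_lt_one : (3 / 4 : ENNReal) < 1 := by
  rw [ENNReal.div_lt_iff (by simp) (by simp)]
  norm_num

lemma centeredExpRate_pos : 0 < centeredExpRate :=
  div_pos (Fernique.logRatio_pos inv_two_lt_three_div_four three_div_four_lt_one) four_pos

lemma gaussianExpRate_pos : 0 < gaussianExpRate := div_pos centeredExpRate_pos (by norm_num)

lemma centeredExpConst_pos : 0 < centeredExpConst :=
  add_pos_of_pos_of_nonneg (Real.exp_pos _) (tsum_nonneg fun _ ↦ (Real.exp_pos _).le)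

lemma gaussianExpConst_pos : 0 < gaussianExpConst :=
  mul_pos (Real.exp_pos _) centeredExpConst_pos

lemma ofReal_centeredExpConst :
    ENNReal.ofReal centeredExpConst = .ofReal (Real.exp (Fernique.logRatio (3 / 4))) +
      ∑' n : ℕ, .ofReal (Real.exp (-2⁻¹ * Real.log (3 / 4 / (1 - 3 / 4) : ENNReal).toReal *
        2 ^ n)) := by
  have odds : (3 / 4 / (1 - 3 / 4) : ENNReal).toReal = 3 := by
    rw [ENNReal.toReal_div, ENNReal.toReal_sub_of_le three_div_four_lt_one.le ENNReal.one_ne_top]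
    norm_num
  have summable : Summable fun n : ℕ ↦ Real.exp (-2⁻¹ * Real.log 3 * 2 ^ n) :=
    Real.summable_exp_nat_mul_of_ge
      (mul_neg_of_neg_of_pos (by norm_num) (Real.log_pos (by norm_num)))
      fun n ↦ mod_cast (Nat.lt_pow_self one_lt_two).le
  rw [odds, centeredExpConst, ENNReal.ofReal_add (Real.exp_pos _).le
    (tsum_nonneg fun _ ↦ (Real.exp_pos _).le),
    ENNReal.ofReal_tsum_of_nonneg (fun _ ↦ (Real.exp_pos _).le) summable]

lemma exp_mul_sq_norm_le {E : Type*} [SeminormedAddCommGroup E] {m : E} {s : ℝ} (hs : 0 < s)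
    (hm : ‖m‖ ^ 2 ≤ s) (x : E) :
    Real.exp (gaussianExpRate / s * ‖x‖ ^ 2) ≤
      Real.exp (centeredExpRate / 4) * Real.exp (centeredExpRate / (4 * s) * ‖x - m‖ ^ 2) := by
  have sq_norm_le : ‖x‖ ^ 2 ≤ 2 * (‖x - m‖ ^ 2 + s) :=
    calc ‖x‖ ^ 2 = ‖x - m + m‖ ^ 2 := by rw [sub_add_cancel]
      _ ≤ (‖x - m‖ + ‖m‖) ^ 2 := by gcongr; exact norm_add_le _ _
      _ ≤ 2 * (‖x - m‖ ^ 2 + ‖m‖ ^ 2) := add_sq_le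
      _ ≤ 2 * (‖x - m‖ ^ 2 + s) := by gcongr
  rw [← Real.exp_add, Real.exp_le_exp]
  calc gaussianExpRate / s * ‖x‖ ^ 2
    _ ≤ gaussianExpRate / s * (2 * (‖x - m‖ ^ 2 + s)) :=
      mul_le_mul_of_nonneg_left sq_norm_le (div_pos gaussianExpRate_pos hs).le
    _ = centeredExpRate / 4 + centeredExpRate / (4 * s) * ‖x - m‖ ^ 2 := by
      rw [gaussianExpRate]
      field_simp
      ring

section GaussianTail

variable {Ω E : Type*} [MeasurableSpace Ω] {P : Measure Ω} [NormedAddCommGroup E]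
  [NormedSpace ℝ E] [MeasurableSpace E] [BorelSpace E] {X : Ω → E} {s : ℝ}

lemma hasGaussianLaw_sub_const (hX : HasGaussianLaw X P) (c : E) :
    HasGaussianLaw (fun ω ↦ X ω - c) P where
  isGaussian_map := by
    have := hX.isGaussian_map
    rw [show (fun ω ↦ X ω - c) = (fun x ↦ x - c) ∘ X from rfl,
      ← AEMeasurable.map_map_of_aemeasurable (by fun_prop) hX.aemeasurable]
    infer_instance

variable [SecondCountableTopology E] [CompleteSpace E]

lemma lintegral_exp_sq_norm_le_of_centered (hX : HasGaussianLaw X P) (hX₀ : ∫ ω, X ω ∂P = 0)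
    (hs : 0 < s) (hXs : ∫ ω, ‖X ω‖ ^ 2 ∂P ≤ s) :
    ∫⁻ ω, .ofReal (Real.exp (centeredExpRate / s * ‖X ω‖ ^ 2)) ∂P ≤
      .ofReal centeredExpConst := by
  have := hX.isProbabilityMeasure
  have := hX.isGaussian_map
  have ball : 3 / 4 ≤ P.map X {x | ‖x‖ ≤ 2 * √s} := by
    rw [Measure.map_apply_of_aemeasurable hX.aemeasurable
      (measurableSet_le measurable_norm measurable_const),
      show (3 / 4 : ENNReal) = .ofReal (3 / 4) by simp [ENNReal.ofReal_div_of_pos],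
      ENNReal.ofReal_le_iff_le_toReal (measure_ne_top _ _)]
    exact three_div_four_le_measureReal_le_two_mul_sqrt
      (hX.memLp_two.integrable_norm_pow two_ne_zero) hs hXs
  have rotation_invariant := IsGaussian.map_rotation_eq_self (μ := P.map X)
    (by rwa [integral_map hX.aemeasurable (by fun_prop)]) (-(Real.pi / 4))
  have rate : Fernique.logRatio (3 / 4) * (2 * √s)⁻¹ ^ 2 = centeredExpRate / s := by
    rw [inv_pow, mul_pow, Real.sq_sqrt hs.le, centeredExpRate]
    field_simp
    norm_num
  have fernique := lintegral_exp_mul_sq_norm_le_of_map_rotation_eq_self rotation_invariant ball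
    inv_two_lt_three_div_four
  rwa [lintegral_map' (by fun_prop) hX.aemeasurable, rate, ← ofReal_centeredExpConst] at fernique

lemma integrable_exp_sq_norm_of_centered (hX : HasGaussianLaw X P) (hX₀ : ∫ ω, X ω ∂P = 0)
    (hs : 0 < s) (hXs : ∫ ω, ‖X ω‖ ^ 2 ∂P ≤ s) :
    Integrable (fun ω ↦ Real.exp (centeredExpRate / s * ‖X ω‖ ^ 2)) P := by
  have := hX.aemeasurable
  refine (lintegral_ofReal_ne_top_iff_integrable (by fun_prop)
    (ae_of_all _ fun _ ↦ (Real.exp_pos _).le)).1 ?_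
  exact ((lintegral_exp_sq_norm_le_of_centered hX hX₀ hs hXs).trans_lt ENNReal.ofReal_lt_top).ne

lemma mgf_sq_norm_le_of_centered (hX : HasGaussianLaw X P) (hX₀ : ∫ ω, X ω ∂P = 0)
    (hs : 0 < s) (hXs : ∫ ω, ‖X ω‖ ^ 2 ∂P ≤ s) :
    mgf (fun ω ↦ ‖X ω‖ ^ 2) P (centeredExpRate / s) ≤ centeredExpConst := by
  rw [← ENNReal.ofReal_le_ofReal_iff centeredExpConst_pos.le, mgf,
    ofReal_integral_eq_lintegral_ofReal (integrable_exp_sq_norm_of_centered hX hX₀ hs hXs)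
      (ae_of_all _ fun _ ↦ (Real.exp_pos _).le)]
  exact lintegral_exp_sq_norm_le_of_centered hX hX₀ hs hXs

lemma integrable_exp_sq_norm_and_mgf_le (hX : HasGaussianLaw X P) (hs : 0 < s)
    (hXs : ∫ ω, ‖X ω‖ ^ 2 ∂P ≤ s) :
    Integrable (fun ω ↦ Real.exp (gaussianExpRate / s * ‖X ω‖ ^ 2)) P ∧
      mgf (fun ω ↦ ‖X ω‖ ^ 2) P (gaussianExpRate / s) ≤ gaussianExpConst := by
  have := hX.isProbabilityMeasure
  have := hX.aemeasurable
  set m := ∫ ω, X ω ∂P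
  have hY := hasGaussianLaw_sub_const hX m
  have hY₀ : ∫ ω, (X ω - m) ∂P = 0 := by
    rw [integral_sub hX.integrable (integrable_const m), integral_const, probReal_univ, one_smul,
      sub_self]
  have hYs : ∫ ω, ‖X ω - m‖ ^ 2 ∂P ≤ 4 * s :=
    (integral_sq_norm_sub_integral_le hX.memLp_two).trans (by gcongr)
  have hms : ‖m‖ ^ 2 ≤ s := (sq_norm_integral_le hX.memLp_two).trans hXs
  have exp_le (ω : Ω) := exp_mul_sq_norm_le hs hms (X ω)
  have dominating := (integrable_exp_sq_norm_of_centered hY hY₀ (by positivity) hYs).const_mul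
    (Real.exp (centeredExpRate / 4))
  have integrable : Integrable (fun ω ↦ Real.exp (gaussianExpRate / s * ‖X ω‖ ^ 2)) P :=
    dominating.mono' (by fun_prop) (ae_of_all _ fun ω ↦ by
      rw [Real.norm_of_nonneg (Real.exp_pos _).le]
      exact exp_le ω)
  refine ⟨integrable, (integral_mono integrable dominating exp_le).trans ?_⟩
  rw [integral_const_mul]
  exact mul_le_mul_of_nonneg_left (mgf_sq_norm_le_of_centered hY hY₀ (by positivity) hYs)
    (Real.exp_pos _).le

lemma measureReal_le_norm_le_of_hasGaussianLaw (hX : HasGaussianLaw X P) (hs : 0 < s)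
    (hXs : ∫ ω, ‖X ω‖ ^ 2 ∂P ≤ s) {r : ℝ} (hr : 0 ≤ r) :
    P.real {ω | r ≤ ‖X ω‖} ≤ gaussianExpConst * Real.exp (-(gaussianExpRate * r ^ 2 / s)) := by
  have := hX.isProbabilityMeasure
  obtain ⟨integrable, mgf_le⟩ := integrable_exp_sq_norm_and_mgf_le hX hs hXs
  calc P.real {ω | r ≤ ‖X ω‖}
    _ = P.real {ω | r ^ 2 ≤ ‖X ω‖ ^ 2} := by simp only [sq_le_sq₀ hr (norm_nonneg _)]
    _ ≤ Real.exp (-(gaussianExpRate / s) * r ^ 2) *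
          mgf (fun ω ↦ ‖X ω‖ ^ 2) P (gaussianExpRate / s) :=
      measure_ge_le_exp_mul_mgf _ (div_pos gaussianExpRate_pos hs).le integrable
    _ ≤ Real.exp (-(gaussianExpRate / s) * r ^ 2) * gaussianExpConst := by gcongr
    _ = gaussianExpConst * Real.exp (-(gaussianExpRate * r ^ 2 / s)) := by
      rw [mul_comm, neg_mul, div_mul_eq_mul_div]

end GaussianTail

/-- The cliff reward of `θ` for the target `μ`, tolerance `ε` and penalty `C` in a normed space;
`cliffJVec` is the case of `ℝ^d` with its Euclidean norm. -/
noncomputable def cliffReward {E : Type*} [SeminormedAddCommGroup E] (μ : E) (ε C : ℝ) (θ : E) :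
    ℝ :=
  if ‖θ - μ‖ ≤ ε then -‖θ - μ‖ ^ 2 else -C

section CliffReward

variable {E : Type*} [SeminormedAddCommGroup E] {μ : E} {ε C : ℝ}

lemma cliffReward_self (hε : 0 ≤ ε) : cliffReward μ ε C μ = 0 := by
  simp [cliffReward, hε]

lemma cliffReward_nonpos (hC : 0 ≤ C) (θ : E) : cliffReward μ ε C θ ≤ 0 := by
  unfold cliffReward
  split_ifs
  · exact neg_nonpos.2 (sq_nonneg _)
  · exact neg_nonpos.2 hC

lemma neg_cliffReward_le (hC : 0 ≤ C) (θ : E) :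
    -cliffReward μ ε C θ ≤ ‖θ - μ‖ ^ 2 + {x | ε ≤ ‖x - μ‖}.indicator (fun _ ↦ C) θ := by
  by_cases h : ‖θ - μ‖ ≤ ε
  · rw [cliffReward, if_pos h, neg_neg]
    exact le_add_of_nonneg_right (Set.indicator_nonneg (fun _ _ ↦ hC) θ)
  · have hθ : θ ∈ {x | ε ≤ ‖x - μ‖} := (not_le.1 h).le
    rw [cliffReward, if_neg h, neg_neg, Set.indicator_of_mem hθ]
    exact le_add_of_nonneg_left (sq_nonneg _)

end CliffReward

section Regret

variable {Ω E : Type*} [MeasurableSpace Ω] {P : Measure Ω} [NormedAddCommGroup E]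
  {θ : Ω → E} {μ : E} {ε C : ℝ}

lemma cliffReward_regret_le [IsFiniteMeasure P] (hθ : MemLp θ 2 P) (hε : 0 ≤ ε) (hC : 0 ≤ C) :
    cliffReward μ ε C μ - ∫ ω, cliffReward μ ε C (θ ω) ∂P ≤
      ∫ ω, ‖θ ω - μ‖ ^ 2 ∂P + C * P.real {ω | ε ≤ ‖θ ω - μ‖} := by
  have hdist : MemLp (fun ω ↦ θ ω - μ) 2 P := hθ.sub (memLp_const μ)
  have hsq := hdist.integrable_norm_pow two_ne_zero
  have hfar : NullMeasurableSet {ω | ε ≤ ‖θ ω - μ‖} P :=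
    nullMeasurableSet_le aemeasurable_const hdist.1.norm.aemeasurable
  have hcost := (integrable_const (μ := P) C).indicator₀ hfar
  rw [cliffReward_self hε, zero_sub, ← integral_neg]
  calc ∫ ω, -cliffReward μ ε C (θ ω) ∂P
    _ ≤ ∫ ω, (‖θ ω - μ‖ ^ 2 + {ω | ε ≤ ‖θ ω - μ‖}.indicator (fun _ ↦ C) ω) ∂P :=
      integral_mono_of_nonneg (ae_of_all _ fun ω ↦ neg_nonneg.2 (cliffReward_nonpos hC (θ ω)))
        (hsq.add hcost) (ae_of_all _ fun ω ↦ neg_cliffReward_le hC (θ ω))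
    _ = ∫ ω, ‖θ ω - μ‖ ^ 2 ∂P + C * P.real {ω | ε ≤ ‖θ ω - μ‖} := by
      rw [integral_add hsq hcost, integral_indicator₀ hfar, setIntegral_const, smul_eq_mul,
        mul_comm]

lemma cliffReward_regret_eq_zero [IsProbabilityMeasure P] (hθ : MemLp θ 2 P)
    (h : ∫ ω, ‖θ ω - μ‖ ^ 2 ∂P = 0) :
    cliffReward μ ε C μ - ∫ ω, cliffReward μ ε C (θ ω) ∂P = 0 := by
  have hsq := (hθ.sub (memLp_const μ)).integrable_norm_pow two_ne_zero
  have eq_target : (fun ω ↦ cliffReward μ ε C (θ ω)) =ᵐ[P] fun _ ↦ cliffReward μ ε C μ := by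
    filter_upwards [(integral_eq_zero_iff_of_nonneg (fun ω ↦ sq_nonneg ‖θ ω - μ‖) hsq).1 h]
      with ω hω
    rw [sub_eq_zero.1 (norm_eq_zero.1 (pow_eq_zero_iff two_ne_zero |>.1 hω))]
  rw [integral_congr_ae eq_target, integral_const, probReal_univ, one_smul, sub_self]

lemma cliffReward_regret_le_of_hasGaussianLaw [NormedSpace ℝ E] [CompleteSpace E]
    [SecondCountableTopology E] [MeasurableSpace E] [BorelSpace E] (hθ : HasGaussianLaw θ P)
    (hε : 0 ≤ ε) (hC : 0 ≤ C) (hpos : 0 < ∫ ω, ‖θ ω - μ‖ ^ 2 ∂P) :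
    cliffReward μ ε C μ - ∫ ω, cliffReward μ ε C (θ ω) ∂P ≤
      ∫ ω, ‖θ ω - μ‖ ^ 2 ∂P + C * gaussianExpConst *
        Real.exp (-(gaussianExpRate * ε ^ 2 / ∫ ω, ‖θ ω - μ‖ ^ 2 ∂P)) := by
  have := hθ.isProbabilityMeasure
  refine (cliffReward_regret_le hθ.memLp_two hε hC).trans ?_
  rw [mul_assoc]
  gcongr
  exact measureReal_le_norm_le_of_hasGaussianLaw (hasGaussianLaw_sub_const hθ μ) hpos le_rfl hε

end Regret

lemma mul_exp_neg_div_le_of_mul_log_le {a b t : ℝ} (ha : 0 < a) (hb : 0 < b)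
    (h : b * Real.log (a / b) ≤ t) : a * Real.exp (-(t / b)) ≤ b := by
  have log_le : Real.log (a / b) ≤ t / b := (le_div_iff₀' hb).2 h
  rw [Real.exp_neg, ← div_eq_mul_inv, div_le_comm₀ (Real.exp_pos _) hb]
  exact (Real.log_le_iff_le_exp (div_pos ha hb)).1 log_le

theorem cliff_loss_small_when_bc_loss_small_general :
    ∃ c₂ c₃ : ℝ, 0 < c₂ ∧ 0 < c₃ ∧
      ∀ {Ω E : Type*} [MeasurableSpace Ω] [NormedAddCommGroup E] [NormedSpace ℝ E]
        [CompleteSpace E] [SecondCountableTopology E] [MeasurableSpace E] [BorelSpace E]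
        (P : Measure Ω) (θ : Ω → E), HasGaussianLaw θ P →
        ∀ (μ : E) (ε C : ℝ), 0 ≤ ε → 0 < C →
          (cliffReward μ ε C μ - (∫ ω, cliffReward μ ε C (θ ω) ∂P) ≤
            2 * (∫ ω, (1 / 2) * ‖θ ω - μ‖ ^ 2 ∂P) +
              C * c₂ * Real.exp (-(c₃ * ε ^ 2) / (2 * ∫ ω, (1 / 2) * ‖θ ω - μ‖ ^ 2 ∂P))) ∧
          (c₃⁻¹ * (∫ ω, (1 / 2) * ‖θ ω - μ‖ ^ 2 ∂P) *
              Real.log (c₂ * C / ∫ ω, (1 / 2) * ‖θ ω - μ‖ ^ 2 ∂P) ≤ ε ^ 2 →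
            cliffReward μ ε C μ - (∫ ω, cliffReward μ ε C (θ ω) ∂P) ≤
              3 * ∫ ω, (1 / 2) * ‖θ ω - μ‖ ^ 2 ∂P) := by
  refine ⟨gaussianExpConst, gaussianExpRate / 2, gaussianExpConst_pos,
    half_pos gaussianExpRate_pos, fun P θ hθ μ ε C hε hC ↦ ?_⟩
  have := hθ.isProbabilityMeasure
  have hc := gaussianExpConst_pos
  have hκ := gaussianExpRate_pos
  obtain ⟨ℓ, hℓ⟩ : ∃ ℓ, ∫ ω, ‖θ ω - μ‖ ^ 2 ∂P = 2 * ℓ := ⟨_, (mul_div_cancel₀ _ two_ne_zero).symm⟩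
  have hℓ₀ : 0 ≤ ℓ := by
    have : 0 ≤ ∫ ω, ‖θ ω - μ‖ ^ 2 ∂P := integral_nonneg fun ω ↦ sq_nonneg _
    linarith
  have bc_loss : ∫ ω, 1 / 2 * ‖θ ω - μ‖ ^ 2 ∂P = ℓ := by
    rw [integral_const_mul, hℓ]
    ring
  rw [bc_loss]
  rcases hℓ₀.eq_or_lt with rfl | hℓpos
  · rw [cliffReward_regret_eq_zero hθ.memLp_two (by rw [hℓ, mul_zero])]
    exact ⟨by positivity, fun _ ↦ by simp⟩
  have hpos : 0 < ∫ ω, ‖θ ω - μ‖ ^ 2 ∂P := by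
    rw [hℓ]
    positivity
  have regret := cliffReward_regret_le_of_hasGaussianLaw hθ hε hC.le hpos
  rw [hℓ] at regret
  refine ⟨regret.trans ?_, fun hlog ↦ ?_⟩
  · rw [← neg_div]
    gcongr
    linarith
  · have log_le : ℓ * Real.log (C * gaussianExpConst / ℓ) ≤ gaussianExpRate / 2 * ε ^ 2 := by
      rwa [mul_assoc, inv_mul_le_iff₀ (half_pos hκ), mul_comm _ C] at hlog
    have tail_le := mul_exp_neg_div_le_of_mul_log_le (mul_pos hC hc) hℓpos log_le
    rw [show gaussianExpRate / 2 * ε ^ 2 / ℓ = gaussianExpRate * ε ^ 2 / (2 * ℓ) by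
      field_simp] at tail_le
    linarith

section Euclidean

variable {d : ℕ}

lemma hasGaussianLaw_toLp_of_isGaussianLaw {ν : Measure (Fin d → ℝ)} {μ' : Fin d → ℝ}
    (hν : IsGaussianLaw ν μ') : HasGaussianLaw (fun x ↦ WithLp.toLp 2 x) ν where
  isGaussian_map := by
    obtain ⟨A, rfl⟩ := hν
    have affine_image :
        ((stdGaussianPi d).map fun z ↦ μ' + A.mulVec z).map (WithLp.toLp 2) =
        ((stdGaussian (EuclideanSpace ℝ (Fin d))).map (Matrix.toEuclideanCLM (𝕜 := ℝ) A)).map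
          (fun y ↦ WithLp.toLp 2 μ' + y) := by
      rw [← map_pi_eq_stdGaussian, Measure.map_map (by fun_prop) (by fun_prop),
        Measure.map_map (by fun_prop) (by fun_prop), Measure.map_map (by fun_prop) (by fun_prop)]
      rfl
    rw [affine_image]
    infer_instance

lemma sq_norm_toLp_sub_toLp (x y : Fin d → ℝ) :
    ‖WithLp.toLp 2 x - WithLp.toLp 2 y‖ ^ 2 = sqnorm (x - y) := by
  simp [EuclideanSpace.real_norm_sq_eq, sqnorm]

lemma cliffReward_toLp (μ x : Fin d → ℝ) (ε C : ℝ) :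
    cliffReward (WithLp.toLp 2 μ) ε C (WithLp.toLp 2 x) = cliffJVec μ ε C x := by
  rw [cliffReward, cliffJVec, ← sq_norm_toLp_sub_toLp, Real.sqrt_sq (norm_nonneg _)]

end Euclidean

/-- Let `θ ∼ N(μ′, Σ)` be a Gaussian random vector in `ℝ^d`, with
`ℓ_BC(θ) = ½‖θ − μ‖²` and the cliff reward `J` with parameters `C ≫ ε² > 0` and optimum
`θ* = μ`. There are universal constants `c₂, c₃ > 0` such that, if `E[ℓ_BC(θ)] ≤ ε²/8`, then
`J(θ*) − E[J(θ)] ≤ 2·E[ℓ_BC(θ)] + C·c₂·exp(−c₃·ε²/(2·E[ℓ_BC(θ)]))`; in particular, if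
`ε² ≥ c₃⁻¹·E[ℓ_BC(θ)]·log(c₂·C/E[ℓ_BC(θ)])`, then `J(θ*) − E[J(θ)] ≤ 3·E[ℓ_BC(θ)]`. -/
theorem cliff_loss_small_when_bc_loss_small :
    ∃ c₂ c₃ : ℝ, 0 < c₂ ∧ 0 < c₃ ∧
      ∀ (d : ℕ) (ν : Measure (Fin d → ℝ)) (μ' : Fin d → ℝ), IsGaussianLaw ν μ' →
        ∀ (μ : Fin d → ℝ) (ε C : ℝ), 0 < ε → ε ^ 2 ≤ C →
          (∫ x, (1 / 2) * sqnorm (x - μ) ∂ν) ≤ ε ^ 2 / 8 →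
          (cliffJVec μ ε C μ - (∫ x, cliffJVec μ ε C x ∂ν) ≤
            2 * (∫ x, (1 / 2) * sqnorm (x - μ) ∂ν) +
              C * c₂ * Real.exp (-(c₃ * ε ^ 2) / (2 * ∫ x, (1 / 2) * sqnorm (x - μ) ∂ν))) ∧
          (c₃⁻¹ * (∫ x, (1 / 2) * sqnorm (x - μ) ∂ν) *
              Real.log (c₂ * C / ∫ x, (1 / 2) * sqnorm (x - μ) ∂ν) ≤ ε ^ 2 →
            cliffJVec μ ε C μ - (∫ x, cliffJVec μ ε C x ∂ν) ≤
              3 * ∫ x, (1 / 2) * sqnorm (x - μ) ∂ν) := by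
  obtain ⟨c₂, c₃, hc₂, hc₃, h⟩ := cliff_loss_small_when_bc_loss_small_general
  refine ⟨c₂, c₃, hc₂, hc₃, fun d ν μ' hν μ ε C hε hC _ ↦ ?_⟩
  simpa only [cliffReward_toLp, sq_norm_toLp_sub_toLp] using
    h ν _ (hasGaussianLaw_toLp_of_isGaussianLaw hν) (WithLp.toLp 2 μ) ε C hε.le
      ((pow_pos hε 2).trans_le hC)
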